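/- arXiv:1212.2243 — 3 statements merged into one kernel-verified Lean document; each statement's English description precedes it below -/
import Mathlib

section
/- Let 𝔽 be a finite field and let C be a convolutional code of length n, dimension k and degree δ with a canonical generator matrix G(z) = G₀ + G₁z + ⋯ + G_δ z^δ (each G_i a k×n matrix over 𝔽). Let C⁰ be the linear block code in 𝔽ⁿ spanned over 𝔽 by the rows of the stacked ((δ+1)k)×n matrix (G_δ; G_{δ−1}; …; G₀), let ν be its dimension and μ its minimum Hamming distance. If ν = k(δ+1) (i.e. the stacked matrix has maximal rank), then d_free(C) = d^r_{l(C)}, where l(C) = ⌊(1/μ)·((n−k)(⌊δ/k⌋+1)+δ+1)⌋ − (δ+1). -/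
open Polynomial

/-- The weight of a vector of polynomials: the total number of nonzero coefficients. -/
noncomputable def polyWeight {F : Type*} [Field F] {n : ℕ} (c : Fin n → Polynomial F) : ℕ :=
  ∑ j, (c j).support.card

/-- The free distance of a submodule of `𝔽[z]ⁿ`: the minimal weight of a nonzero element. -/
noncomputable def freeDist {F : Type*} [Field F] {n : ℕ}
    (C : Submodule (Polynomial F) (Fin n → Polynomial F)) : ℕ :=
  sInf {d | ∃ c ∈ C, c ≠ 0 ∧ polyWeight c = d}

/-- The Hamming weight of a vector. -/
noncomputable def hammingWt {F : Type*} [Field F] {n : ℕ} (v : Fin n → F) : ℕ :=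
  Set.ncard {j | v j ≠ 0}

/-- The minimum distance of a linear block code. -/
noncomputable def minDist {F : Type*} [Field F] {n : ℕ} (C : Submodule F (Fin n → F)) : ℕ :=
  sInf {d | ∃ v ∈ C, v ≠ 0 ∧ hammingWt v = d}

/-- The `l`-th row distance of the convolutional code with generator matrix `G`. -/
noncomputable def rowDist {F : Type*} [Field F] {k n : ℕ}
    (G : Fin k → Fin n → Polynomial F) (l : ℕ) : ℕ :=
  sInf {d | ∃ α : Fin k → Polynomial F, α ≠ 0 ∧ (∀ i, (α i).natDegree ≤ l) ∧
    polyWeight (fun j => ∑ i, α i * G i j) = d}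

/-- The set of maximal (`k × k`) minors of a `k × n` polynomial matrix. -/
def maximalMinors {F : Type*} [Field F] {k n : ℕ} (G : Fin k → Fin n → Polynomial F) :
    Set (Polynomial F) :=
  {p | ∃ φ : Fin k ↪ Fin n, p = Matrix.det (Matrix.of fun i j => G i (φ j))}

/-- A generator matrix is basic when its maximal minors are coprime, i.e. generate the
unit ideal of `𝔽[z]`. -/
def IsBasic {F : Type*} [Field F] {k n : ℕ} (G : Fin k → Fin n → Polynomial F) : Prop :=
  Ideal.span (maximalMinors G) = ⊤

/-- The degree of the code: the highest degree of the maximal minors of a generator matrix. -/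
noncomputable def degCode {F : Type*} [Field F] {k n : ℕ}
    (G : Fin k → Fin n → Polynomial F) : ℕ :=
  sSup (Polynomial.natDegree '' maximalMinors G)

/-- The degree of the `i`-th row of a polynomial matrix. -/
noncomputable def rowDeg {F : Type*} [Field F] {k n : ℕ}
    (G : Fin k → Fin n → Polynomial F) (i : Fin k) : ℕ :=
  Finset.univ.sup fun j => (G i j).natDegree

/-- A generator matrix is reduced when the sum of its row degrees equals the maximal degree
of its maximal minors. -/
def IsReducedMatrix {F : Type*} [Field F] {k n : ℕ} (G : Fin k → Fin n → Polynomial F) : Prop :=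
  (∑ i, rowDeg G i) = degCode G

/-- A generator matrix is canonical when it is basic and reduced. -/
def IsCanonical {F : Type*} [Field F] {k n : ℕ} (G : Fin k → Fin n → Polynomial F) : Prop :=
  IsBasic G ∧ IsReducedMatrix G

/-!
A nonzero input `α` of degree `a` to an encoder of memory `N` produces an output whose coefficient
vectors at `0, …, a + N` lie in the block code spanned by the stacked coefficient matrix. If the
stacked rows are independent and the output vanishes at one of these instants `m`, then the
previous `N + 1` input vectors vanish too, so discarding everything up to `m` from both the
input and the output leaves a shorter input with an output that is at most as heavy. Hence a
codeword of minimal weight `d` can be chosen without zero coefficient vectors, and its input then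
satisfies `(a + N + 1) μ ≤ d`. The generalized Singleton bound
`d ≤ (n - k) (⌊δ / k⌋ + 1) + δ + 1` turns this into the stated bound on `a`.
-/

section Polynomial

variable {R : Type*} [Semiring R]

theorem coeff_mul_eq_sum_fin {N : ℕ} {q : R[X]} (hq : q.natDegree ≤ N) (p : R[X]) (m : ℕ) :
    (p * q).coeff m = ∑ d : Fin (N + 1), (p * X ^ (d : ℕ)).coeff m * q.coeff d := by
  conv_lhs => rw [q.as_sum_range' (N + 1) (Nat.lt_succ_of_le hq), Finset.mul_sum,
    finsetSum_coeff, Finset.sum_range]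
  refine Finset.sum_congr rfl fun d _ => ?_
  rw [← C_mul_X_pow_eq_monomial, ← X_pow_mul_C, ← mul_assoc, coeff_mul_C]

theorem coeff_sum_C_mul_X_pow {N : ℕ} (a : Fin N → R) (d : Fin N) :
    (∑ e : Fin N, C (a e) * X ^ (e : ℕ)).coeff d = a d := by
  simp [finsetSum_coeff, Fin.val_inj]

theorem natDegree_sum_C_mul_X_pow_le {N : ℕ} (a : Fin (N + 1) → R) :
    (∑ e : Fin (N + 1), C (a e) * X ^ (e : ℕ)).natDegree ≤ N :=
  natDegree_sum_le_of_forall_le _ _ fun e _ =>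
    (natDegree_C_mul_X_pow_le _ _).trans (Nat.le_of_lt_succ e.2)

theorem coeff_iterate_divX (p : R[X]) (s m : ℕ) : (divX^[s] p).coeff m = p.coeff (m + s) := by
  induction s generalizing m with
  | zero => rfl
  | succ s ih => rw [Function.iterate_succ_apply', coeff_divX, ih, Nat.add_right_comm, add_assoc]

theorem natDegree_iterate_divX (p : R[X]) (s : ℕ) :
    (divX^[s] p).natDegree = p.natDegree - s := by
  induction s with
  | zero => rfl
  | succ s ih => rw [Function.iterate_succ_apply', natDegree_divX_eq_natDegree_tsub_one, ih,
      Nat.sub_sub]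

theorem card_support_iterate_divX_le (p : R[X]) (s : ℕ) :
    (divX^[s] p).support.card ≤ p.support.card := by
  refine Finset.card_le_card_of_injOn (· + s) (fun m hm => ?_) (add_left_injective s).injOn
  simpa [coeff_iterate_divX] using hm

theorem coeff_iterate_divX_mul_X_pow {N m : ℕ} {p : R[X]}
    (hp : ∀ d ≤ N, (p * X ^ d).coeff m = 0) {d : ℕ} (hd : d ≤ N) (t : ℕ) :
    (divX^[m + 1] p * X ^ d).coeff t = (p * X ^ d).coeff (t + (m + 1)) := by
  rcases le_or_gt d t with hdt | htd
  · rw [coeff_mul_X_pow', coeff_mul_X_pow', if_pos hdt, if_pos (by omega), coeff_iterate_divX,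
      Nat.sub_add_comm hdt]
  · have hsplit : p * X ^ d = p * X ^ (d - (t + 1)) * X ^ (t + 1) := by
      rw [mul_assoc, ← pow_add, Nat.sub_add_cancel htd]
    rw [coeff_mul_X_pow', if_neg htd.not_ge, hsplit, show t + (m + 1) = m + (t + 1) by omega,
      coeff_mul_X_pow, hp _ (by omega)]

theorem iterate_divX_mul {N m : ℕ} {p q : R[X]} (hp : ∀ d ≤ N, (p * X ^ d).coeff m = 0)
    (hq : q.natDegree ≤ N) : divX^[m + 1] (p * q) = divX^[m + 1] p * q := by
  ext t
  rw [coeff_iterate_divX, coeff_mul_eq_sum_fin hq, coeff_mul_eq_sum_fin hq]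
  refine Finset.sum_congr rfl fun d _ => ?_
  rw [coeff_iterate_divX_mul_X_pow hp (Nat.le_of_lt_succ d.2)]

theorem iterate_divX_sum {ι : Type*} (s : Finset ι) (f : ι → R[X]) (r : ℕ) :
    divX^[r] (∑ i ∈ s, f i) = ∑ i ∈ s, divX^[r] (f i) := by
  ext m
  simp only [coeff_iterate_divX, finsetSum_coeff]

end Polynomial

theorem exists_ne_zero_forall_mem_eq_zero {K V ι : Type*} [DivisionRing K] [AddCommGroup V]
    [Module K V] (f : V →ₗ[K] ι → K) (T : Finset ι) (hT : T.card < Module.finrank K V) :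
    ∃ v ≠ 0, ∀ i ∈ T, f v i = 0 := by
  have := Module.finite_of_finrank_pos (Nat.zero_lt_of_lt hT)
  have hker : LinearMap.ker (LinearMap.funLeft K K ((↑) : T → ι) ∘ₗ f) ≠ ⊥ :=
    LinearMap.ker_ne_bot_of_finrank_lt (by simpa using hT)
  obtain ⟨v, hv, hv0⟩ := (Submodule.ne_bot_iff _).1 hker
  exact ⟨v, hv0, fun i hi => congrFun (LinearMap.mem_ker.1 hv) ⟨i, hi⟩⟩

theorem mul_succ_le_sum_add_card_filter_eq {ι : Type*} (s : Finset ι) (f : ι → ℕ) {e : ℕ}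
    (he : ∀ i ∈ s, e ≤ f i) : s.card * (e + 1) ≤ ∑ i ∈ s, f i + {i ∈ s | f i = e}.card := by
  rw [Finset.card_filter, ← Finset.sum_add_distrib, ← smul_eq_mul]
  refine Finset.card_nsmul_le_sum _ _ _ fun i hi => ?_
  have := he i hi
  split_ifs <;> omega

section ConvolutionalCode

variable {F : Type*} [Field F] {k n N : ℕ}

/-- The vector of coefficients of `z ^ m` in a vector of polynomials, that is, `c_m` when
`c(z) = c₀ + c₁ z + ⋯`. -/
def coeffVec (c : Fin n → F[X]) (m : ℕ) : Fin n → F := fun j => (c j).coeff m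

/-- The degree of a vector of polynomials, with value `0` at the zero vector; `rowDeg G i` is
`vecDeg (G i)`. -/
noncomputable def vecDeg (c : Fin n → F[X]) : ℕ := Finset.univ.sup fun j => (c j).natDegree

/-- The rows of the stacked matrix `(G_N; …; G₀)` of an encoder `G(z) = G₀ + ⋯ + G_N z ^ N`,
where `(d, i)` indexes the `i`-th row of `G_d`. -/
def stackedRows (G : Fin k → Fin n → F[X]) (N : ℕ) : Fin (N + 1) × Fin k → Fin n → F :=
  fun p => coeffVec (G p.2) p.1

/-- The codeword `α(z) G(z)` that the encoder `G` produces from the input `α`. -/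
noncomputable def encode (G : Fin k → Fin n → F[X]) (α : Fin k → F[X]) : Fin n → F[X] :=
  fun j => ∑ i, α i * G i j

theorem encode_eq_sum_smul (G : Fin k → Fin n → F[X]) (α : Fin k → F[X]) :
    encode G α = ∑ i, α i • G i := by
  ext1 j
  simp [encode]

theorem natDegree_le_vecDeg (c : Fin n → F[X]) (j : Fin n) : (c j).natDegree ≤ vecDeg c :=
  Finset.le_sup (f := fun j => (c j).natDegree) (Finset.mem_univ j)

theorem vecDeg_le_iff {c : Fin n → F[X]} {l : ℕ} : vecDeg c ≤ l ↔ ∀ j, (c j).natDegree ≤ l := by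
  simp [vecDeg]

theorem exists_coeff_vecDeg_ne_zero {c : Fin n → F[X]} (hc : c ≠ 0) :
    ∃ j, (c j).coeff (vecDeg c) ≠ 0 := by
  obtain ⟨j₀, hj₀⟩ := Function.ne_iff.1 hc
  obtain ⟨j, -, hj⟩ := Finset.exists_mem_eq_sup Finset.univ ⟨j₀, Finset.mem_univ _⟩
    fun j => (c j).natDegree
  rcases eq_or_ne (c j) 0 with h0 | h0
  · have hdeg : vecDeg c = 0 := by rw [vecDeg, hj, h0, natDegree_zero]
    have hconst : (c j₀).natDegree = 0 := Nat.le_zero.1 (hdeg ▸ natDegree_le_vecDeg c j₀)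
    exact ⟨j₀, by rwa [hdeg, ← hconst, coeff_natDegree, leadingCoeff_ne_zero]⟩
  · exact ⟨j, by rwa [vecDeg, hj, coeff_natDegree, leadingCoeff_ne_zero]⟩

section Weight

theorem polyWeight_iterate_divX_le (c : Fin n → F[X]) (s : ℕ) :
    polyWeight (fun j => divX^[s] (c j)) ≤ polyWeight c :=
  Finset.sum_le_sum fun j _ => card_support_iterate_divX_le (c j) s

theorem polyWeight_le_card {c : Fin n → F[X]} {S : Finset (Fin n × ℕ)}
    (hS : ∀ j m, (c j).coeff m ≠ 0 → (j, m) ∈ S) : polyWeight c ≤ S.card := by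
  rw [polyWeight, ← Finset.card_sigma]
  refine Finset.card_le_card_of_injOn (fun p => (p.1, p.2)) (fun p hp => ?_) fun p _ q _ h => ?_
  · exact hS _ _ (mem_support_iff.1 (Finset.mem_sigma.1 hp).2)
  · exact Sigma.ext (Prod.ext_iff.1 h).1 (heq_of_eq (Prod.ext_iff.1 h).2)

theorem sum_hammingWt_coeffVec_le_polyWeight (c : Fin n → F[X]) (S : Finset ℕ) :
    ∑ m ∈ S, hammingWt (coeffVec c m) ≤ polyWeight c := by
  classical
  have hcard (m : ℕ) : hammingWt (coeffVec c m) = ∑ j, if (c j).coeff m ≠ 0 then 1 else 0 := by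
    rw [← Finset.card_filter, ← Set.ncard_coe_finset]
    simp [hammingWt, coeffVec]
  simp_rw [hcard]
  rw [Finset.sum_comm]
  refine Finset.sum_le_sum fun j _ => ?_
  rw [← Finset.card_filter]
  exact Finset.card_le_card fun m hm => mem_support_iff.2 (Finset.mem_filter.1 hm).2

theorem minDist_le_hammingWt {C : Submodule F (Fin n → F)} {v : Fin n → F} (hv : v ∈ C)
    (h0 : v ≠ 0) : minDist C ≤ hammingWt v :=
  Nat.sInf_le ⟨v, hv, h0, rfl⟩

theorem minDist_pos {C : Submodule F (Fin n → F)} (hC : C ≠ ⊥) : 0 < minDist C := by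
  obtain ⟨w, hw, hw0⟩ := C.ne_bot_iff.1 hC
  obtain ⟨v, -, hv0, hd⟩ := Nat.sInf_mem (s := {d | ∃ v ∈ C, v ≠ 0 ∧ hammingWt v = d})
    ⟨_, w, hw, hw0, rfl⟩
  rw [minDist, ← hd, hammingWt, Set.ncard_pos]
  exact Function.ne_iff.1 hv0

theorem mul_minDist_le_polyWeight {C : Submodule F (Fin n → F)} {c : Fin n → F[X]} {L : ℕ}
    (hC : ∀ m, coeffVec c m ∈ C) (hc : ∀ m < L, coeffVec c m ≠ 0) :
    L * minDist C ≤ polyWeight c :=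
  calc L * minDist C = ∑ _m ∈ Finset.range L, minDist C := by simp
    _ ≤ ∑ m ∈ Finset.range L, hammingWt (coeffVec c m) :=
      Finset.sum_le_sum fun m hm => minDist_le_hammingWt (hC m) (hc m (Finset.mem_range.1 hm))
    _ ≤ polyWeight c := sum_hammingWt_coeffVec_le_polyWeight c _

end Weight

section Distance

variable {G : Fin k → Fin n → F[X]}

theorem encode_mem_span_range (G : Fin k → Fin n → F[X]) (α : Fin k → F[X]) :
    encode G α ∈ Submodule.span F[X] (Set.range G) :=
  (Submodule.mem_span_range_iff_exists_fun _).2 ⟨α, (encode_eq_sum_smul G α).symm⟩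

theorem encode_ne_zero (hind : LinearIndependent F[X] G) {α : Fin k → F[X]} (hα : α ≠ 0) :
    encode G α ≠ 0 := fun h =>
  hα (funext (Fintype.linearIndependent_iff.1 hind α ((encode_eq_sum_smul G α).symm.trans h)))

theorem freeDist_le_polyWeight {C : Submodule F[X] (Fin n → F[X])} {c : Fin n → F[X]}
    (hc : c ∈ C) (h0 : c ≠ 0) : freeDist C ≤ polyWeight c :=
  Nat.sInf_le ⟨c, hc, h0, rfl⟩

theorem exists_polyWeight_encode_eq_freeDist (hk : 0 < k) (hind : LinearIndependent F[X] G) :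
    ∃ α : Fin k → F[X], α ≠ 0 ∧
      polyWeight (encode G α) = freeDist (Submodule.span F[X] (Set.range G)) := by
  have hrow : G ⟨0, hk⟩ ∈ Submodule.span F[X] (Set.range G) := Submodule.subset_span ⟨_, rfl⟩
  obtain ⟨c, hc, hc0, hw⟩ := Nat.sInf_mem
    (s := {d | ∃ c ∈ Submodule.span F[X] (Set.range G), c ≠ 0 ∧ polyWeight c = d})
    ⟨_, _, hrow, hind.ne_zero _, rfl⟩
  obtain ⟨α, rfl⟩ := (Submodule.mem_span_range_iff_exists_fun _).1 hc
  refine ⟨α, fun h => hc0 (by simp [h]), ?_⟩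
  rw [encode_eq_sum_smul]
  exact hw

theorem rowDist_le_polyWeight {α : Fin k → F[X]} (hα : α ≠ 0) {l : ℕ} (hl : vecDeg α ≤ l) :
    rowDist G l ≤ polyWeight (encode G α) :=
  Nat.sInf_le ⟨α, hα, vecDeg_le_iff.1 hl, rfl⟩

theorem freeDist_le_rowDist (hk : 0 < k) (hind : LinearIndependent F[X] G) (l : ℕ) :
    freeDist (Submodule.span F[X] (Set.range G)) ≤ rowDist G l := by
  have hone : (fun _ => 1 : Fin k → F[X]) ≠ 0 := fun h => one_ne_zero (congrFun h ⟨0, hk⟩)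
  obtain ⟨α, hα, -, hw⟩ := Nat.sInf_mem
    (s := {d | ∃ α : Fin k → F[X], α ≠ 0 ∧ (∀ i, (α i).natDegree ≤ l) ∧
      polyWeight (encode G α) = d})
    ⟨_, _, hone, fun _ => by simp, rfl⟩
  exact (freeDist_le_polyWeight (encode_mem_span_range G α) (encode_ne_zero hind hα)).trans_eq hw

end Distance

section SingletonBound

variable {G : Fin k → Fin n → F[X]}

-- Constant combinations of the rows in `s` have `n (e + 1)` coefficients, and `s.card - 1` of
-- these can be made to vanish simultaneously.
theorem freeDist_add_card_le (hind : LinearIndependent F[X] G) {s : Finset (Fin k)}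
    (hs : s.Nonempty) {e : ℕ} (he : ∀ i ∈ s, rowDeg G i ≤ e) :
    freeDist (Submodule.span F[X] (Set.range G)) + s.card ≤ n * (e + 1) + 1 := by
  classical
  have hkn : k ≤ n := by simpa using hind.fintype_card_le_finrank
  have hsk : s.card ≤ k := by simpa using s.card_le_univ
  have hle : n ≤ n * (e + 1) := Nat.le_mul_of_pos_right n e.succ_pos
  let P : Finset (Fin n × ℕ) := Finset.univ ×ˢ Finset.range (e + 1)
  have hP : P.card = n * (e + 1) := by simp [P]
  obtain ⟨T, hTP, hT⟩ : ∃ T ⊆ P, T.card = s.card - 1 :=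
    Finset.exists_subset_card_eq (by omega)
  obtain ⟨a, ha, haT⟩ := exists_ne_zero_forall_mem_eq_zero
    (Fintype.linearCombination F fun (i : s) (p : Fin n × ℕ) => (G i p.1).coeff p.2) T
    (by simp [hT, hs.card_pos])
  let c : Fin n → F[X] := ∑ i : s, C (a i) • G i
  have hcoeff (j : Fin n) (m : ℕ) : (c j).coeff m = ∑ i : s, a i * (G i j).coeff m := by
    simp [c, finsetSum_coeff]
  have hc : c ∈ Submodule.span F[X] (Set.range G) :=
    Submodule.sum_mem _ fun i _ => Submodule.smul_mem _ _ (Submodule.subset_span ⟨i, rfl⟩)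
  have hc0 : c ≠ 0 := fun h => ha <| funext fun i => C_eq_zero.1 <|
    Fintype.linearIndependent_iff.1 (hind.comp _ Subtype.val_injective) (fun i => C (a i)) h i
  have hsupp (j : Fin n) (m : ℕ) (hjm : (c j).coeff m ≠ 0) : (j, m) ∈ P \ T := by
    refine Finset.mem_sdiff.2 ⟨?_, fun hmem => hjm ?_⟩
    · obtain ⟨i, -, hi⟩ := Finset.exists_ne_zero_of_sum_ne_zero (hcoeff j m ▸ hjm)
      have hm : m ≤ e := (le_natDegree_of_ne_zero (right_ne_zero_of_mul hi)).trans
        ((natDegree_le_vecDeg (G i) j).trans (he i i.2))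
      simpa [P] using Nat.lt_succ_of_le hm
    · simpa [hcoeff, Fintype.linearCombination_apply] using haT _ hmem
  have hw := (freeDist_le_polyWeight hc hc0).trans (polyWeight_le_card hsupp)
  rw [Finset.card_sdiff_of_subset hTP, hP, hT] at hw
  have := hs.card_pos
  omega

/-- The generalized Singleton bound of Rosenthal and Smarandache. -/
theorem freeDist_le_generalizedSingleton (hk : 0 < k) (hind : LinearIndependent F[X] G) {δ : ℕ}
    (hδ : ∑ i, rowDeg G i = δ) :
    freeDist (Submodule.span F[X] (Set.range G)) ≤ (n - k) * (δ / k + 1) + δ + 1 := by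
  obtain ⟨i₀, -, hmin⟩ := Finset.exists_min_image Finset.univ (rowDeg G)
    ⟨⟨0, hk⟩, Finset.mem_univ _⟩
  set e := rowDeg G i₀
  let s : Finset (Fin k) := {i | rowDeg G i = e}
  have hdist : freeDist (Submodule.span F[X] (Set.range G)) + s.card ≤ n * (e + 1) + 1 :=
    freeDist_add_card_le hind ⟨i₀, by simp [s, e]⟩ fun i hi => (Finset.mem_filter.1 hi).2.le
  have hcard : k * (e + 1) ≤ δ + s.card := by
    simpa [hδ] using mul_succ_le_sum_add_card_filter_eq Finset.univ (rowDeg G) hmin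
  have he : e ≤ δ / k := by
    refine (Nat.le_div_iff_mul_le hk).2 ?_
    simpa [hδ, mul_comm] using Finset.card_nsmul_le_sum Finset.univ (rowDeg G) e hmin
  calc freeDist (Submodule.span F[X] (Set.range G))
      ≤ (n - k) * (e + 1) + δ + 1 := by rw [Nat.sub_mul]; omega
    _ ≤ (n - k) * (δ / k + 1) + δ + 1 := by gcongr

end SingletonBound

section StackedRows

variable {G : Fin k → Fin n → F[X]}

theorem coeffVec_encode (hN : ∀ i, rowDeg G i ≤ N) (α : Fin k → F[X]) (m : ℕ) :
    coeffVec (encode G α) m =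
      ∑ p : Fin (N + 1) × Fin k, (α p.2 * X ^ (p.1 : ℕ)).coeff m • stackedRows G N p := by
  ext j
  have hdeg (i : Fin k) : (G i j).natDegree ≤ N := (natDegree_le_vecDeg (G i) j).trans (hN i)
  calc (∑ i, α i * G i j).coeff m
      = ∑ i, ∑ d : Fin (N + 1), (α i * X ^ (d : ℕ)).coeff m * (G i j).coeff d := by
        rw [finsetSum_coeff]
        exact Finset.sum_congr rfl fun i _ => coeff_mul_eq_sum_fin (hdeg i) (α i) m
    _ = _ := by
        rw [Finset.sum_comm, ← Fintype.sum_prod_type']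
        simp [stackedRows, coeffVec]

theorem coeffVec_encode_mem_span (hN : ∀ i, rowDeg G i ≤ N) (α : Fin k → F[X]) (m : ℕ) :
    coeffVec (encode G α) m ∈ Submodule.span F (Set.range (stackedRows G N)) := by
  rw [coeffVec_encode hN]
  exact Submodule.sum_mem _ fun p _ => Submodule.smul_mem _ _ (Submodule.subset_span ⟨p, rfl⟩)

theorem coeff_mul_X_pow_eq_zero_of_coeffVec_encode_eq_zero (hN : ∀ i, rowDeg G i ≤ N)
    (hli : LinearIndependent F (stackedRows G N)) {α : Fin k → F[X]} {m : ℕ}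
    (hm : coeffVec (encode G α) m = 0) (i : Fin k) {d : ℕ} (hd : d ≤ N) :
    (α i * X ^ d).coeff m = 0 := by
  rw [coeffVec_encode hN] at hm
  exact Fintype.linearIndependent_iff.1 hli _ hm (⟨d, Nat.lt_succ_of_le hd⟩, i)

theorem linearIndependent_of_stackedRows (hN : ∀ i, rowDeg G i ≤ N)
    (hli : LinearIndependent F (stackedRows G N)) : LinearIndependent F[X] G := by
  refine Fintype.linearIndependent_iff.2 fun α hα i => ext fun m => ?_
  have hm : coeffVec (encode G α) m = 0 := by
    rw [encode_eq_sum_smul, show ∑ i, α i • G i = 0 from hα]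
    rfl
  simpa using coeff_mul_X_pow_eq_zero_of_coeffVec_encode_eq_zero hN hli hm i N.zero_le

-- The `N + 1` input vectors up to the instant `m` vanish, so the encoder is back in its zero state
-- and what follows is encoded as if it were a fresh input.
theorem encode_iterate_divX (hN : ∀ i, rowDeg G i ≤ N) {α : Fin k → F[X]} {m : ℕ}
    (hα : ∀ i, ∀ d ≤ N, (α i * X ^ d).coeff m = 0) :
    encode G (fun i => divX^[m + 1] (α i)) = fun j => divX^[m + 1] (encode G α j) := by
  ext1 j
  simp only [encode, iterate_divX_sum]
  exact Finset.sum_congr rfl fun i _ =>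
    (iterate_divX_mul (hα i) ((natDegree_le_vecDeg (G i) j).trans (hN i))).symm

theorem exists_vecDeg_lt_of_coeffVec_encode_eq_zero (hN : ∀ i, rowDeg G i ≤ N)
    (hli : LinearIndependent F (stackedRows G N)) {α : Fin k → F[X]} (hα : α ≠ 0) {m : ℕ}
    (hm : m ≤ vecDeg α + N) (hm0 : coeffVec (encode G α) m = 0) :
    ∃ β : Fin k → F[X], β ≠ 0 ∧ vecDeg β < vecDeg α ∧
      polyWeight (encode G β) ≤ polyWeight (encode G α) := by
  have hwindow (i : Fin k) (d : ℕ) (hd : d ≤ N) : (α i * X ^ d).coeff m = 0 :=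
    coeff_mul_X_pow_eq_zero_of_coeffVec_encode_eq_zero hN hli hm0 i hd
  obtain ⟨i, hi⟩ := exists_coeff_vecDeg_ne_zero hα
  have hlt : m < vecDeg α := by
    by_contra! hle
    refine hi ?_
    simpa [coeff_mul_X_pow', Nat.sub_sub_self hle] using hwindow i (m - vecDeg α) (by omega)
  refine ⟨fun i => divX^[m + 1] (α i), fun h => hi ?_, ?_, ?_⟩
  · rw [← Nat.sub_add_cancel (Nat.succ_le_of_lt hlt), ← coeff_iterate_divX]
    exact congrArg (fun p : F[X] => p.coeff _) (congrFun h i)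
  · refine (vecDeg_le_iff.2 fun i => ?_).trans_lt (Nat.sub_lt (by omega) m.succ_pos)
    rw [natDegree_iterate_divX]
    exact Nat.sub_le_sub_right (natDegree_le_vecDeg α i) _
  · rw [encode_iterate_divX hN hwindow]
    exact polyWeight_iterate_divX_le _ _

theorem exists_forall_coeffVec_encode_ne_zero (hN : ∀ i, rowDeg G i ≤ N)
    (hli : LinearIndependent F (stackedRows G N)) {α : Fin k → F[X]} (hα : α ≠ 0) :
    ∃ β : Fin k → F[X], β ≠ 0 ∧ polyWeight (encode G β) ≤ polyWeight (encode G α) ∧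
      ∀ m ≤ vecDeg β + N, coeffVec (encode G β) m ≠ 0 := by
  induction hl : vecDeg α using Nat.strong_induction_on generalizing α with
  | _ l ih =>
    subst hl
    by_cases hall : ∀ m ≤ vecDeg α + N, coeffVec (encode G α) m ≠ 0
    · exact ⟨α, hα, le_rfl, hall⟩
    · push Not at hall
      obtain ⟨m, hm, hm0⟩ := hall
      obtain ⟨β, hβ, hlt, hw⟩ := exists_vecDeg_lt_of_coeffVec_encode_eq_zero hN hli hα hm hm0
      obtain ⟨γ, hγ, hwγ, hne⟩ := ih _ hlt hβ rfl
      exact ⟨γ, hγ, hwγ.trans hw, hne⟩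

theorem span_stackedRows_ne_bot (hk : 0 < k) (hli : LinearIndependent F (stackedRows G N)) :
    Submodule.span F (Set.range (stackedRows G N)) ≠ ⊥ :=
  (Submodule.ne_bot_iff _).2
    ⟨_, Submodule.subset_span ⟨(0, ⟨0, hk⟩), rfl⟩, hli.ne_zero (0, ⟨0, hk⟩)⟩

theorem freeDist_eq_rowDist_of_freeDist_le (hk : 0 < k) (hN : ∀ i, rowDeg G i ≤ N)
    (hli : LinearIndependent F (stackedRows G N)) {B : ℕ}
    (hB : freeDist (Submodule.span F[X] (Set.range G)) ≤ B) :
    freeDist (Submodule.span F[X] (Set.range G)) =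
      rowDist G (B / minDist (Submodule.span F (Set.range (stackedRows G N))) - (N + 1)) := by
  have hind := linearIndependent_of_stackedRows hN hli
  refine (freeDist_le_rowDist hk hind _).antisymm ?_
  obtain ⟨α, hα, hw⟩ := exists_polyWeight_encode_eq_freeDist hk hind
  obtain ⟨β, hβ, hle, hne⟩ := exists_forall_coeffVec_encode_ne_zero hN hli hα
  have hweight := mul_minDist_le_polyWeight (coeffVec_encode_mem_span hN β)
    fun m (hm : m < vecDeg β + N + 1) => hne m (Nat.le_of_lt_succ hm)
  have hdeg := (Nat.le_div_iff_mul_le (minDist_pos (span_stackedRows_ne_bot hk hli))).2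
    (hweight.trans (hle.trans (hw.le.trans hB)))
  rw [← hw]
  exact (rowDist_le_polyWeight hβ (Nat.le_sub_of_add_le hdeg)).trans hle

end StackedRows

theorem freeDist_eq_rowDist_general {δ : ℕ} (hk : 0 < k) (G : Fin k → Fin n → F[X])
    (Gc : Fin (N + 1) → Fin k → Fin n → F)
    (hG : ∀ i j, G i j = ∑ d : Fin (N + 1), C (Gc d i j) * X ^ (d : ℕ))
    (hδ : ∑ i, rowDeg G i = δ) (C0 : Submodule F (Fin n → F))
    (hC0 : C0 = Submodule.span F (Set.range fun p : Fin (N + 1) × Fin k => Gc p.1 p.2))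
    (hν : Module.finrank F C0 = k * (N + 1)) (μ : ℕ) (hμ : μ = minDist C0) :
    freeDist (Submodule.span F[X] (Set.range G)) =
      rowDist G (((n - k) * (δ / k + 1) + δ + 1) / μ - (N + 1)) := by
  have hstack : stackedRows G N = fun p => Gc p.1 p.2 := by
    ext p j
    rw [stackedRows, coeffVec, hG, coeff_sum_C_mul_X_pow]
  have hN (i : Fin k) : rowDeg G i ≤ N :=
    vecDeg_le_iff.2 fun j => hG i j ▸ natDegree_sum_C_mul_X_pow_le _
  rw [← hstack] at hC0
  have hli : LinearIndependent F (stackedRows G N) := by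
    rw [linearIndependent_iff_card_eq_finrank_span, Set.finrank, ← hC0, hν]
    simp [mul_comm]
  rw [hμ, hC0]
  exact freeDist_eq_rowDist_of_freeDist_le hk hN hli <|
    freeDist_le_generalizedSingleton hk (linearIndependent_of_stackedRows hN hli) hδ

end ConvolutionalCode

/-- For a convolutional code with a canonical generator matrix
`G(z) = G₀ + G₁ z + ⋯ + G_δ z^δ` of degree `δ` such that the stacked matrix
`(G_δ; …; G₀)` has maximal rank `k(δ+1)`, the free distance equals the `l(C)`-th
row distance, where `l(C) = ⌊((n-k)(⌊δ/k⌋+1)+δ+1)/μ⌋ - (δ+1)` and `μ` is the minimum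
distance of the block code `C⁰` spanned by the rows of the stacked matrix. -/
theorem freeDist_eq_rowDist {F : Type*} [Field F] [Fintype F] {k n δ : ℕ} (hk : 0 < k)
    (G : Fin k → Fin n → Polynomial F)
    (Gc : Fin (δ + 1) → Fin k → Fin n → F)
    (hG : ∀ i j, G i j = ∑ d : Fin (δ + 1), Polynomial.C (Gc d i j) * Polynomial.X ^ (d : ℕ))
    (hcan : IsCanonical G) (hdeg : degCode G = δ)
    (hind : LinearIndependent (Polynomial F) G)
    (C0 : Submodule F (Fin n → F))
    (hC0 : C0 = Submodule.span F (Set.range fun p : Fin (δ + 1) × Fin k => Gc p.1 p.2))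
    (hν : Module.finrank F C0 = k * (δ + 1))
    (μ : ℕ) (hμ : μ = minDist C0) :
    freeDist (Submodule.span (Polynomial F) (Set.range G)) =
      rowDist G (((n - k) * (δ / k + 1) + δ + 1) / μ - (δ + 1)) :=
  freeDist_eq_rowDist_general hk G Gc hG (hcan.2.trans hdeg) C0 hC0 hν μ hμ
end

section
/- Let 𝔽 ↪ 𝔽′ be an extension of finite fields and let G(z) be a k×n matrix over 𝔽[z] whose rows are linearly independent over 𝔽(z). Let C ⊆ 𝔽[z]ⁿ be the 𝔽[z]-submodule spanned by the rows of G(z), and let C′ ⊆ 𝔽′[z]ⁿ be the 𝔽′[z]-submodule spanned by the rows of G(z). Then d_free(C) = d_free(C′); that is, the free distance of a convolutional code is preserved by enlargements of the alphabet. -/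
open Polynomial

/-!
Extension of scalars sends nonzero elements of the code over `F` to nonzero elements of the code
over `F'` of the same weight. Conversely, an `F`-linear functional `F' → F`, applied to every
coefficient, does not increase weights and is `F[X]`-linear, so it sends the code over `F'` back
into the code over `F`; any nonzero element survives for a functional that does not vanish at one
of its nonzero coefficients.
-/

theorem csInf_le_csInf_of_isCoinitialFor {α : Type*} [ConditionallyCompleteLattice α]
    {s t : Set α} (ht : BddBelow t) (hs : s.Nonempty) (hst : IsCoinitialFor s t) :
    sInf t ≤ sInf s :=
  le_csInf hs fun _ ha ↦
    have ⟨_, hb, hba⟩ := hst ha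
    (csInf_le ht hb).trans hba

theorem csInf_eq_csInf_of_isCoinitialFor {α : Type*} [ConditionallyCompleteLattice α] [OrderBot α]
    {s t : Set α} (hst : IsCoinitialFor s t) (hts : IsCoinitialFor t s) : sInf s = sInf t := by
  rcases s.eq_empty_or_nonempty with rfl | hs
  · rw [Set.not_nonempty_iff_eq_empty.mp fun ht ↦ Set.not_nonempty_empty (hts.nonempty ht)]
  · exact le_antisymm
      (csInf_le_csInf_of_isCoinitialFor (OrderBot.bddBelow s) (hst.nonempty hs) hts)
      (csInf_le_csInf_of_isCoinitialFor (OrderBot.bddBelow t) hs hst)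

theorem map_mem_span_range_map {R A κ ι : Type*} [Semiring R] [Semiring A] (φ : R →+* A)
    (G : κ → ι → R[X]) {c : ι → R[X]} (hc : c ∈ Submodule.span R[X] (Set.range G)) :
    (fun j ↦ (c j).map φ) ∈ Submodule.span A[X] (Set.range fun i j ↦ (G i j).map φ) := by
  induction hc using Submodule.span_induction with
  | mem _ hx =>
    obtain ⟨i, rfl⟩ := hx
    exact Submodule.subset_span ⟨i, rfl⟩
  | zero =>
    simp only [Pi.zero_apply, Polynomial.map_zero]
    exact Submodule.zero_mem _
  | add _ _ _ _ hx hy =>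
    simp only [Pi.add_apply, Polynomial.map_add]
    exact Submodule.add_mem _ hx hy
  | smul p _ _ hx =>
    simp only [Pi.smul_apply, smul_eq_mul, Polynomial.map_mul]
    exact Submodule.smul_mem _ (p.map φ) hx

section MapCoeffs

variable {R A : Type*}

/-- The coefficientwise extension `∑ aᵢ Xⁱ ↦ ∑ f(aᵢ) Xⁱ` of a linear functional `f` on `A`. It
carries codes over the larger alphabet `A` to codes over `R`. As `f` need not be multiplicative,
`Polynomial.map` does not apply. -/
noncomputable def mapCoeffs [Semiring R] [Semiring A] [Module R A] (f : A →ₗ[R] R) :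
    A[X] →ₗ[R] R[X] :=
  lsum fun i ↦ monomial i ∘ₗ f

@[simp]
theorem coeff_mapCoeffs [Semiring R] [Semiring A] [Module R A] (f : A →ₗ[R] R) (p : A[X])
    (m : ℕ) : (mapCoeffs f p).coeff m = f (p.coeff m) := by
  simp +contextual [mapCoeffs, lsum, sum_def, coeff_monomial]

theorem support_mapCoeffs_subset [Semiring R] [Semiring A] [Module R A] (f : A →ₗ[R] R)
    (p : A[X]) : (mapCoeffs f p).support ⊆ p.support := fun m hm ↦ by
  rw [mem_support_iff, coeff_mapCoeffs] at hm
  exact mem_support_iff.mpr (ne_zero_of_map hm)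

theorem mapCoeffs_mul_map [CommSemiring R] [Semiring A] [Algebra R A] (f : A →ₗ[R] R)
    (p : A[X]) (q : R[X]) :
    mapCoeffs f (p * q.map (algebraMap R A)) = mapCoeffs f p * q := by
  ext m
  simp only [coeff_mapCoeffs, coeff_mul, coeff_map, map_sum, ← Algebra.commutes,
    ← Algebra.smul_def, map_smul, smul_eq_mul]
  exact Finset.sum_congr rfl fun _ _ ↦ mul_comm _ _

theorem mapCoeffs_mem_span_range [CommSemiring R] [Semiring A] [Algebra R A] {κ ι : Type*}
    (f : A →ₗ[R] R) (G : κ → ι → R[X]) {c : ι → A[X]}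
    (hc : c ∈ Submodule.span A[X] (Set.range fun i j ↦ (G i j).map (algebraMap R A))) :
    (fun j ↦ mapCoeffs f (c j)) ∈ Submodule.span R[X] (Set.range G) := by
  -- `mapCoeffs f` is not `A[X]`-linear, so the induction has to carry all multiples of `c`.
  suffices ∀ p : A[X], (fun j ↦ mapCoeffs f (p * c j)) ∈ Submodule.span R[X] (Set.range G) by
    simpa only [one_mul] using this 1
  induction hc using Submodule.span_induction with
  | mem _ hx =>
    obtain ⟨i, rfl⟩ := hx
    intro p
    simp only [mapCoeffs_mul_map]
    exact Submodule.smul_mem _ (mapCoeffs f p) (Submodule.subset_span ⟨i, rfl⟩)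
  | zero =>
    intro p
    simp only [Pi.zero_apply, mul_zero, map_zero]
    exact Submodule.zero_mem _
  | add _ _ _ _ hx hy =>
    intro p
    simp only [Pi.add_apply, mul_add, map_add]
    exact Submodule.add_mem _ (hx p) (hy p)
  | smul q _ _ hx =>
    intro p
    simpa only [Pi.smul_apply, smul_eq_mul, mul_assoc] using hx (p * q)

theorem exists_mapCoeffs_ne_zero (R : Type*) [Semiring R] [Semiring A] [Module R A]
    [Module.Projective R A] {ι : Type*} {c : ι → A[X]} (hc : c ≠ 0) :
    ∃ f : A →ₗ[R] R, (fun j ↦ mapCoeffs f (c j)) ≠ 0 := by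
  obtain ⟨j, hj⟩ := Function.ne_iff.mp hc
  obtain ⟨m, hm⟩ : ∃ m, (c j).coeff m ≠ 0 := by
    simpa only [Pi.zero_apply, ne_eq, Polynomial.ext_iff, coeff_zero, not_forall] using hj
  obtain ⟨f, hf⟩ := Module.Projective.exists_dual_ne_zero R hm
  refine ⟨f, fun h ↦ hf ?_⟩
  rw [← coeff_mapCoeffs, congrFun h j, Pi.zero_apply, coeff_zero]

end MapCoeffs

section FreeDist

variable {F F' : Type*} [Field F] [Field F'] {n : ℕ}

theorem polyWeight_map (φ : F →+* F') (c : Fin n → F[X]) :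
    polyWeight (fun j ↦ (c j).map φ) = polyWeight c := by
  simp only [polyWeight, support_map_of_injective _ φ.injective]

theorem polyWeight_mapCoeffs_le [Module F F'] (f : F' →ₗ[F] F) (c : Fin n → F'[X]) :
    polyWeight (fun j ↦ mapCoeffs f (c j)) ≤ polyWeight c :=
  Finset.sum_le_sum fun j _ ↦ Finset.card_le_card (support_mapCoeffs_subset f (c j))

theorem freeDist_baseChange_general [Algebra F F'] {κ : Type*} (G : κ → Fin n → F[X]) :
    freeDist (Submodule.span F[X] (Set.range G)) =
      freeDist (Submodule.span F'[X]
        (Set.range fun i j ↦ (G i j).map (algebraMap F F'))) := by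
  refine csInf_eq_csInf_of_isCoinitialFor ?_ ?_
  · rintro _ ⟨c, hc, hc0, rfl⟩
    have hmap0 : (fun j ↦ (c j).map (algebraMap F F')) ≠ 0 := by
      simpa only [ne_eq, funext_iff, Pi.zero_apply, Polynomial.map_eq_zero] using hc0
    exact ⟨_, ⟨_, map_mem_span_range_map (algebraMap F F') G hc, hmap0, rfl⟩,
      (polyWeight_map _ c).le⟩
  · rintro _ ⟨c, hc, hc0, rfl⟩
    obtain ⟨f, hf0⟩ := exists_mapCoeffs_ne_zero F hc0
    exact ⟨_, ⟨_, mapCoeffs_mem_span_range f G hc, hf0, rfl⟩, polyWeight_mapCoeffs_le f c⟩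

end FreeDist

/-- The free distance of a convolutional code is preserved by
enlargements of the alphabet: if `𝔽 ↪ 𝔽′` is an extension of finite fields and `C`, `C′`
are the codes spanned by the rows of `G(z)` over `𝔽[z]` and `𝔽′[z]` respectively, then
`d_free(C) = d_free(C′)`. -/
theorem freeDist_baseChange {F F' : Type*} [Field F] [Fintype F] [Field F'] [Fintype F']
    [Algebra F F'] {k n : ℕ}
    (G : Fin k → Fin n → Polynomial F)
    (hind : LinearIndependent (Polynomial F) G) :
    freeDist (Submodule.span (Polynomial F) (Set.range G)) =
      freeDist (Submodule.span (Polynomial F')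
        (Set.range fun i => fun j => (G i j).map (algebraMap F F'))) :=
  freeDist_baseChange_general G
end

section
/- Let 𝔽 be a finite field with algebraic closure 𝔽̄, let 𝒢(z) be a k×n matrix with entries in 𝔽[λ₀,…,λ_r][z], and for α ∈ 𝔽̄^{r+1} let 𝒢_α(z) denote the k×n matrix over 𝔽̄[z] obtained by evaluating λ_i ↦ α_i. Let U ⊆ 𝔽̄^{r+1} be a Zariski open subset such that for every α ∈ U the rows of 𝒢_α(z) are linearly independent over 𝔽̄(z), and let C_α ⊆ 𝔽̄[z]ⁿ be the 𝔽̄[z]-submodule spanned by the rows of 𝒢_α(z). Then for every integer N the set {α ∈ U : d_free(C_α) ≤ N} is Zariski closed in U; equivalently, the function α ↦ d_free(C_α) is lower semicontinuous on U for the Zariski topology. -/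
open Polynomial

/-!
A matrix whose product with a word `c` vanishes and whose entries have degree at most `D` cannot
see across a gap of more than `D` consecutive degrees in which `c` has no coefficient. A word of
weight at most `N` and large degree has such a gap, and cutting it there splits the word into two
words of the saturation of the code, one of which has weight at most `N / 2`. Conversely, `K` being
algebraic over a finite field, every nonzero maximal minor `δ` of the generator matrix divides some
`X ^ j - X ^ i`; as `δ` times a word `v` of the saturation is a codeword, `(X ^ j - X ^ i) • v` is a
codeword of weight at most twice that of `v`. So wherever `δ ≠ 0`, the free distance is at most `N`
exactly when there is a codeword of weight at most `N` or a word of the saturation of weight at most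
`N / 2`, each with degrees bounded independently of the parameter. For every choice of the positions
that may be nonzero, the existence of such a word is the solvability of a homogeneous linear system
with coefficients polynomial in the parameter, hence the vanishing of minors.
-/

theorem span_range_col_eq_top {K κ ι : Type*} [Field K] [Finite κ] {M : Matrix κ ι K}
    (hM : LinearIndependent K M.row) : Submodule.span K (Set.range M.col) = ⊤ := by
  classical
  have := Fintype.ofFinite κ
  by_contra hne
  obtain ⟨g, hg, hle⟩ := Submodule.exists_le_ker_of_lt_top _ (lt_top_iff_ne_top.2 hne)
  have hrel : ∑ a, g (Pi.single a 1) • M.row a = 0 := funext fun i => by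
    have hi : g (M.col i) = 0 := hle (Submodule.subset_span ⟨i, rfl⟩)
    rw [pi_eq_sum_univ' (M.col i), map_sum] at hi
    simpa [Finset.sum_apply, mul_comm, Pi.single, Function.update_apply, eq_comm] using hi
  have hgsingle := Fintype.linearIndependent_iff.1 hM _ hrel
  exact hg (LinearMap.pi_ext' fun a => LinearMap.ext_ring (hgsingle a))

theorem exists_isUnit_submatrix {K κ ι : Type*} [Field K] [Fintype κ] [DecidableEq κ]
    {M : Matrix κ ι K} (hM : LinearIndependent K M.row) :
    ∃ f : κ → ι, IsUnit (M.submatrix id f) := by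
  obtain ⟨κ', a, -, hspan, hli⟩ := exists_linearIndependent' K M.col
  let b := Module.Basis.mk hli (hspan.trans (span_range_col_eq_top hM)).ge
  let e := (Pi.basisFun K κ).indexEquiv b
  exact ⟨a ∘ e, Matrix.linearIndependent_cols_iff_isUnit.1 (hli.comp e e.injective)⟩

theorem exists_submatrix_det_ne_zero {R κ ι : Type*} [CommRing R] [IsDomain R]
    [Fintype κ] [DecidableEq κ] {M : Matrix κ ι R} (hM : LinearIndependent R M.row) :
    ∃ f : κ → ι, (M.submatrix id f).det ≠ 0 := by
  let φ := algebraMap R (FractionRing R)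
  have hφ : Function.Injective φ := IsFractionRing.injective R (FractionRing R)
  have hMφ : LinearIndependent (FractionRing R) (M.map φ).row :=
    (LinearIndependent.iff_fractionRing (R := R) (K := FractionRing R)).1 <|
      hM.map_injOn ((Algebra.linearMap R (FractionRing R)).compLeft ι) (hφ.comp_left.injOn)
  obtain ⟨f, hf⟩ := exists_isUnit_submatrix hMφ
  refine ⟨f, fun h => ((Matrix.isUnit_iff_isUnit_det _).1 hf).ne_zero ?_⟩
  rw [Matrix.submatrix_map, ← RingHom.mapMatrix_apply, ← RingHom.map_det, h, map_zero]

theorem exists_mulVec_eq_zero_iff_forall_det_submatrix_eq_zero {R κ J : Type*} [CommRing R]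
    [IsDomain R] [Fintype κ] [DecidableEq κ] {M : Matrix J κ R} :
    (∃ x, x ≠ 0 ∧ M.mulVec x = 0) ↔ ∀ f : κ → J, (M.submatrix f id).det = 0 := by
  constructor
  · rintro ⟨x, hx, hMx⟩ f
    exact Matrix.exists_mulVec_eq_zero_iff.1 ⟨x, hx, funext fun a => congrFun hMx (f a)⟩
  · intro h
    have hdep : ¬ LinearIndependent R M.transpose.row := fun hli => by
      obtain ⟨f, hf⟩ := exists_submatrix_det_ne_zero hli
      exact hf ((Matrix.det_transpose _).trans (h f))
    obtain ⟨x, hx, i, hi⟩ := Fintype.not_linearIndependent_iff.1 hdep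
    refine ⟨x, fun h0 => hi (congrFun h0 i), funext fun j => ?_⟩
    simpa [Matrix.mulVec, dotProduct, mul_comm] using congrFun hx j

theorem exists_dvd_X_pow_sub_X_pow (F : Type*) {K : Type*} [Field F] [Finite F] [Field K]
    [Algebra F K] [Algebra.IsAlgebraic F K] {p : K[X]} (hp : p ≠ 0) :
    ∃ i j : ℕ, i < j ∧ p ∣ X ^ j - X ^ i := by
  let x := AdjoinRoot.root p
  have hx : IsIntegral F x := isIntegral_trans x (AdjoinRoot.isIntegral_root hp)
  have : Module.Finite F (Algebra.adjoin F {x}) := .of_fg hx.fg_adjoin_singleton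
  have : Finite (Algebra.adjoin F {x}) := Module.finite_of_finite F
  obtain ⟨i, j, hij, hpow⟩ := Finite.exists_ne_map_eq_of_infinite
    fun m : ℕ => (⟨x, Algebra.self_mem_adjoin_singleton F x⟩ : Algebra.adjoin F {x}) ^ m
  wlog hlt : i < j generalizing i j
  · exact this j i hij.symm hpow.symm (hij.lt_of_le' (not_lt.1 hlt))
  refine ⟨i, j, hlt, AdjoinRoot.mk_eq_mk.1 ?_⟩
  simpa [x] using (congrArg Subtype.val hpow).symm

/-! ### Weights and gaps -/

theorem exists_eq_pow_smul_and_not_dvd {ι R : Type*} [CommMonoidWithZero R] [IsCancelMulZero R]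
    [WfDvdMonoid R] {p : R} (hp : ¬ IsUnit p) {a : ι → R} (ha : a ≠ 0) :
    ∃ (m : ℕ) (b : ι → R), a = p ^ m • b ∧ ∃ i, ¬ p ∣ b i := by
  classical
  have hex : ∃ m i, ¬ p ^ (m + 1) ∣ a i := by
    obtain ⟨i, hi⟩ := Function.ne_iff.1 ha
    obtain ⟨m, hm⟩ := FiniteMultiplicity.of_not_isUnit hp hi
    exact ⟨m, i, hm⟩
  obtain ⟨m, ⟨i, hi⟩, hmin⟩ := Nat.findX hex
  have hdvd (j) : p ^ m ∣ a j := by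
    cases m with
    | zero => simp
    | succ m => exact not_not.1 fun hj => hmin m m.lt_succ_self ⟨j, hj⟩
  choose b hb using hdvd
  refine ⟨m, b, funext hb, i, fun hpb => hi ?_⟩
  rw [hb i, pow_succ]
  exact mul_dvd_mul_left _ hpb

theorem exists_disjoint_Icc (W : Finset ℕ) {D m : ℕ} (hm : (W.card + 1) * (D + 1) ≤ m) :
    ∃ t, t + D < m ∧ Disjoint W (Finset.Icc t (t + D)) := by
  by_contra! hne
  have hsub : Finset.range (W.card + 1) ⊆ W.image (· / (D + 1)) := fun i hi => by
    have hi' : (i + 1) * (D + 1) ≤ (W.card + 1) * (D + 1) :=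
      Nat.mul_le_mul_right _ (Finset.mem_range.1 hi)
    obtain ⟨w, hw, hwi⟩ := Finset.not_disjoint_iff.1 (hne (i * (D + 1)) (by linarith))
    rw [Finset.mem_Icc] at hwi
    exact Finset.mem_image.2 ⟨w, hw, Nat.div_eq_of_lt_le hwi.1 (by linarith)⟩
  have hcard := (Finset.card_le_card hsub).trans Finset.card_image_le
  rw [Finset.card_range] at hcard
  exact Nat.not_succ_le_self _ hcard

theorem eq_zero_of_add_X_pow_mul_eq_zero {R : Type*} [Semiring R] {p q : R[X]} {T : ℕ}
    (hp : p.natDegree < T) (h : p + X ^ T * q = 0) : p = 0 ∧ q = 0 := by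
  have hq : q = 0 := by
    ext m
    simpa [coeff_eq_zero_of_natDegree_lt (hp.trans_le (Nat.le_add_left T m)), coeff_X_pow_mul']
      using congrArg (coeff · (m + T)) h
  simpa [hq] using h

theorem natDegree_vecMul_le {R ι J : Type*} [Semiring R] [Fintype ι] {P : Matrix ι J R[X]}
    {d D : ℕ} {c : ι → R[X]} (hc : ∀ i, (c i).natDegree ≤ d) (hP : ∀ i j, (P i j).natDegree ≤ D)
    (j : J) : (Matrix.vecMul c P j).natDegree ≤ d + D :=
  natDegree_sum_le_of_forall_le _ _ fun i _ => natDegree_mul_le.trans (add_le_add (hc i) (hP i j))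

section Split
variable {R : Type*} [Ring R]

theorem coeff_modByMonic_X_pow_of_le (p : R[X]) {T m : ℕ} (hm : T ≤ m) :
    (p %ₘ X ^ T).coeff m = 0 := by
  nontriviality R
  exact coeff_eq_zero_of_degree_lt <|
    (degree_modByMonic_lt p (monic_X_pow T)).trans_le (by simpa using hm)

theorem coeff_modByMonic_X_pow_of_lt (p : R[X]) {T m : ℕ} (hm : m < T) :
    (p %ₘ X ^ T).coeff m = p.coeff m := by
  simpa [coeff_X_pow_mul', hm.not_ge] using congrArg (coeff · m) (modByMonic_add_div p (X ^ T))

theorem coeff_divByMonic_X_pow (p : R[X]) (T m : ℕ) : (p /ₘ X ^ T).coeff m = p.coeff (m + T) := by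
  simpa [coeff_modByMonic_X_pow_of_le] using
    congrArg (coeff · (m + T)) (modByMonic_add_div p (X ^ T))

theorem card_support_modByMonic_add_card_support_divByMonic (p : R[X]) (T : ℕ) :
    (p %ₘ X ^ T).support.card + (p /ₘ X ^ T).support.card = p.support.card := by
  have hmod : (p %ₘ X ^ T).support = {m ∈ p.support | m < T} := by
    ext m
    rcases lt_or_ge m T with hm | hm
    · simp [coeff_modByMonic_X_pow_of_lt p hm, hm]
    · simp [coeff_modByMonic_X_pow_of_le p hm, hm.not_gt]
  have hdiv : (p /ₘ X ^ T).support.map (addRightEmbedding T) = {m ∈ p.support | ¬ m < T} := by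
    ext m
    simp only [Finset.mem_map, mem_support_iff, coeff_divByMonic_X_pow, addRightEmbedding_apply,
      Finset.mem_filter, not_lt]
    constructor
    · rintro ⟨i, hi, rfl⟩
      exact ⟨hi, Nat.le_add_left T i⟩
    · rintro ⟨hm, hT⟩
      exact ⟨m - T, by rwa [Nat.sub_add_cancel hT], Nat.sub_add_cancel hT⟩
  rw [← Finset.card_map (addRightEmbedding T) (s := (p /ₘ X ^ T).support), hmod, hdiv,
    Finset.card_filter_add_card_filter_not]

theorem card_support_X_pow_sub_X_pow_le (i j : ℕ) :
    (X ^ j - X ^ i : R[X]).support.card ≤ 2 := by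
  have hmono (m : ℕ) : (X ^ m : R[X]).support.card ≤ 1 :=
    card_support_le_one_iff_monomial.2 ⟨m, 1, X_pow_eq_monomial m⟩
  rw [sub_eq_add_neg]
  calc _ ≤ _ := Finset.card_le_card support_add
    _ ≤ _ := Finset.card_union_le _ _
    _ ≤ 1 + 1 := add_le_add (hmono j) (by rw [support_neg]; exact hmono i)

end Split

section Weight
open Matrix
variable {K : Type*} [Field K] {n : ℕ}

theorem polyWeight_smul_le (p : K[X]) (c : Fin n → K[X]) :
    polyWeight (p • c) ≤ p.support.card * polyWeight c := by
  rw [polyWeight, polyWeight, Finset.mul_sum]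
  exact Finset.sum_le_sum fun j _ => card_support_mul_le

theorem polyWeight_X_pow_smul (m : ℕ) (c : Fin n → K[X]) :
    polyWeight ((X ^ m : K[X]) • c) = polyWeight c := by
  refine Finset.sum_congr rfl fun j _ => ?_
  have hdiv : (X ^ m * c j) /ₘ X ^ m = c j := mul_divByMonic_cancel_left _ (monic_X_pow m)
  have hmod : (X ^ m * c j) %ₘ X ^ m = 0 :=
    (modByMonic_eq_zero_iff_dvd (monic_X_pow m)).2 (dvd_mul_right _ _)
  rw [Pi.smul_apply, smul_eq_mul, ← card_support_modByMonic_add_card_support_divByMonic _ m, hmod,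
    hdiv, support_zero, Finset.card_empty, zero_add]

theorem polyWeight_le_iff_exists {B N : ℕ} {c : Fin n → K[X]} (hc : ∀ j, (c j).natDegree ≤ B) :
    polyWeight c ≤ N ↔ ∃ S ∈ (Finset.univ.sigma fun _ : Fin n => Finset.range (B + 1)).powerset,
      S.card ≤ N ∧ ∀ j m, ⟨j, m⟩ ∉ S → (c j).coeff m = 0 := by
  have hcard : polyWeight c = (Finset.univ.sigma fun j => (c j).support).card :=
    (Finset.card_sigma _ _).symm
  rw [hcard]
  constructor
  · refine fun hN => ⟨_, Finset.mem_powerset.2 (Finset.sigma_mono subset_rfl fun j m hm => ?_), hN,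
      fun j m hm => by simpa using hm⟩
    exact Finset.mem_range.2 (Nat.lt_succ_of_le ((le_natDegree_of_mem_supp m hm).trans (hc j)))
  · rintro ⟨S, -, hS, hcS⟩
    refine (Finset.card_le_card fun ⟨j, m⟩ hm => ?_).trans hS
    exact not_not.1 fun h => by simp [hcS j m h] at hm

/-- The part of a word of polynomials in degrees below `T`. -/
noncomputable def lowPart (T : ℕ) (c : Fin n → K[X]) : Fin n → K[X] := fun j => c j %ₘ X ^ T

/-- The part of a word of polynomials in degrees at least `T`, shifted down to start in
degree `0`. -/
noncomputable def highPart (T : ℕ) (c : Fin n → K[X]) : Fin n → K[X] := fun j => c j /ₘ X ^ T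

theorem lowPart_add_X_pow_smul_highPart (T : ℕ) (c : Fin n → K[X]) :
    lowPart T c + (X ^ T : K[X]) • highPart T c = c :=
  funext fun j => modByMonic_add_div (c j) (X ^ T)

theorem polyWeight_lowPart_add_polyWeight_highPart (T : ℕ) (c : Fin n → K[X]) :
    polyWeight (lowPart T c) + polyWeight (highPart T c) = polyWeight c := by
  rw [polyWeight, polyWeight, ← Finset.sum_add_distrib]
  exact Finset.sum_congr rfl fun j _ => card_support_modByMonic_add_card_support_divByMonic (c j) T

theorem natDegree_highPart (T : ℕ) (c : Fin n → K[X]) (j : Fin n) :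
    (highPart T c j).natDegree = (c j).natDegree - T := by
  rw [highPart, natDegree_divByMonic _ (monic_X_pow T), natDegree_X_pow]

theorem highPart_ne_zero {T : ℕ} {c : Fin n → K[X]} {j : Fin n} (hc : c j ≠ 0)
    (hT : T ≤ (c j).natDegree) : highPart T c ≠ 0 := fun h => by
  have hlead : (highPart T c j).coeff ((c j).natDegree - T) = (c j).leadingCoeff := by
    rw [highPart, coeff_divByMonic_X_pow, Nat.sub_add_cancel hT, coeff_natDegree]
  rw [h, Pi.zero_apply, coeff_zero] at hlead
  exact leadingCoeff_ne_zero.2 hc hlead.symm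

variable {J : Type*} {P : Matrix (Fin n) J K[X]} {D : ℕ}

theorem exists_vecMul_lowPart_eq_zero_and_vecMul_highPart_eq_zero
    (hP : ∀ i j, (P i j).natDegree ≤ D) {c : Fin n → K[X]} (hcP : c ᵥ* P = 0) {m : ℕ}
    (hm : (polyWeight c + 1) * (D + 1) ≤ m) :
    ∃ T, D < T ∧ T ≤ m ∧ lowPart T c ᵥ* P = 0 ∧ highPart T c ᵥ* P = 0 := by
  let W := Finset.univ.biUnion fun j => (c j).support
  have hW : W.card ≤ polyWeight c := Finset.card_biUnion_le
  obtain ⟨t, htm, hdisj⟩ := exists_disjoint_Icc W (D := D) (m := m) <|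
    (Nat.mul_le_mul_right _ (Nat.succ_le_succ hW)).trans hm
  have hlow (j : Fin n) : (lowPart (t + D + 1) c j).natDegree ≤ t := by
    refine natDegree_le_iff_coeff_eq_zero.2 fun i hi => ?_
    rcases lt_or_ge i (t + D + 1) with hlt | hge
    · rw [lowPart, coeff_modByMonic_X_pow_of_lt _ hlt]
      by_contra hne
      exact Finset.disjoint_left.1 hdisj
        (Finset.mem_biUnion.2 ⟨j, Finset.mem_univ j, mem_support_iff.2 hne⟩)
        (Finset.mem_Icc.2 ⟨hi.le, Nat.lt_succ_iff.1 hlt⟩)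
    · exact coeff_modByMonic_X_pow_of_le _ hge
  have hsplit (j : J) := eq_zero_of_add_X_pow_mul_eq_zero
    (p := (lowPart (t + D + 1) c ᵥ* P) j) (q := (highPart (t + D + 1) c ᵥ* P) j)
    (Nat.lt_succ_of_le (natDegree_vecMul_le hlow hP j)) <| by
      rw [← lowPart_add_X_pow_smul_highPart (t + D + 1) c, add_vecMul, smul_vecMul] at hcP
      exact congrFun hcP j
  exact ⟨t + D + 1, by omega, htm, funext fun j => (hsplit j).1, funext fun j => (hsplit j).2⟩

theorem exists_natDegree_le_of_vecMul_eq_zero (hP : ∀ i j, (P i j).natDegree ≤ D) {N : ℕ}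
    {c : Fin n → K[X]} (hc : c ≠ 0) (hcP : c ᵥ* P = 0) (hcN : polyWeight c ≤ N) :
    ∃ v, v ≠ 0 ∧ (∀ j, (v j).natDegree ≤ (N + 1) * (D + 1)) ∧ polyWeight v ≤ N ∧ v ᵥ* P = 0 := by
  obtain ⟨d, hd⟩ := Finite.exists_le fun j => (c j).natDegree
  induction d using Nat.strong_induction_on generalizing c with
  | _ d ih =>
    by_cases hB : ∀ j, (c j).natDegree ≤ (N + 1) * (D + 1)
    · exact ⟨c, hc, hB, hcN, hcP⟩
    push Not at hB
    obtain ⟨j, hj⟩ := hB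
    obtain ⟨T, hDT, hTj, -, hhigh⟩ := exists_vecMul_lowPart_eq_zero_and_vecMul_highPart_eq_zero
      hP hcP ((Nat.mul_le_mul_right _ (Nat.succ_le_succ hcN)).trans hj.le)
    have hwt := polyWeight_lowPart_add_polyWeight_highPart T c
    refine ih (d - T) (by have := hd j; omega)
      (highPart_ne_zero (ne_zero_of_natDegree_gt hj) hTj) hhigh (by omega) fun i => ?_
    rw [natDegree_highPart]
    exact Nat.sub_le_sub_right (hd i) T

end Weight

/-! ### The saturation of a code -/

section Saturation
open Matrix

section CommRing
variable {R κ ι : Type*} [CommRing R] [Fintype κ]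

theorem exists_mul_eq_det_submatrix_smul_one [Fintype ι] [DecidableEq κ] (G : Matrix κ ι R)
    (φ : κ → ι) : ∃ Q : Matrix ι κ R, G * Q = (G.submatrix id φ).det • (1 : Matrix κ κ R) := by
  classical
  refine ⟨(1 : Matrix ι ι R).submatrix id φ * (G.submatrix id φ).adjugate, ?_⟩
  have hG : G * (1 : Matrix ι ι R).submatrix id φ = G.submatrix id φ :=
    mul_submatrix_one (Equiv.refl ι) φ G
  rw [← Matrix.mul_assoc, hG, mul_adjugate]

variable {δ : R} {Q : Matrix ι κ R} {G : Matrix κ ι R}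

theorem vecMul_vecMul_eq_smul [Fintype ι] [DecidableEq κ] (hGQ : G * Q = δ • (1 : Matrix κ κ R))
    (a : κ → R) : (a ᵥ* G) ᵥ* Q = δ • a := by
  rw [vecMul_vecMul, hGQ, vecMul_smul, vecMul_one]

variable [DecidableEq ι]

/-- A parity-check matrix for the saturation of the row space of `G`: when `G * Q = δ • 1` for a
nonzero element `δ` of a domain, a word lies in its left kernel if and only if some nonzero multiple
of the word is in the row space of `G`. -/
def parityCheck (δ : R) (Q : Matrix ι κ R) (G : Matrix κ ι R) : Matrix ι ι R := δ • 1 - Q * G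

theorem map_parityCheck {S : Type*} [CommRing S] (f : R →+* S) :
    (parityCheck δ Q G).map f = parityCheck (f δ) (Q.map f) (G.map f) := by
  rw [parityCheck, parityCheck, Matrix.map_sub f (map_sub f), Matrix.map_smul' f _ _ (map_mul f),
    Matrix.map_one f (map_zero f) (map_one f), Matrix.map_mul]

variable [Fintype ι]

theorem vecMul_parityCheck_eq_zero_iff {v : ι → R} :
    v ᵥ* parityCheck δ Q G = 0 ↔ δ • v = (v ᵥ* Q) ᵥ* G := by
  rw [parityCheck, vecMul_sub, vecMul_smul, vecMul_one, ← vecMul_vecMul, sub_eq_zero]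

theorem vecMul_vecMul_parityCheck [DecidableEq κ] (hGQ : G * Q = δ • (1 : Matrix κ κ R))
    (a : κ → R) : (a ᵥ* G) ᵥ* parityCheck δ Q G = 0 :=
  vecMul_parityCheck_eq_zero_iff.2 <| by rw [vecMul_vecMul_eq_smul hGQ, smul_vecMul]

end CommRing

variable {K κ : Type*} [Field K] [Fintype κ] {n D N : ℕ}
  {δ : K[X]} {Q : Matrix (Fin n) κ K[X]} {G : Matrix κ (Fin n) K[X]}

theorem exists_polyWeight_vecMul_le_of_parityCheck (F : Type*) [Field F] [Finite F] [Algebra F K]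
    [Algebra.IsAlgebraic F K] (hδ : δ ≠ 0) {v : Fin n → K[X]} (hv : v ≠ 0)
    (hvP : v ᵥ* parityCheck δ Q G = 0) :
    ∃ a, a ≠ 0 ∧ polyWeight (a ᵥ* G) ≤ 2 * polyWeight v := by
  obtain ⟨i, j, hij, g, hg⟩ := exists_dvd_X_pow_sub_X_pow F hδ
  have hne : (X ^ j - X ^ i : K[X]) ≠ 0 := fun h =>
    hij.ne' (by simpa using congrArg natDegree (sub_eq_zero.1 h))
  have hmul : (g • (v ᵥ* Q)) ᵥ* G = (X ^ j - X ^ i : K[X]) • v := by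
    rw [smul_vecMul, ← vecMul_parityCheck_eq_zero_iff.1 hvP, smul_smul, hg, mul_comm]
  refine ⟨g • (v ᵥ* Q), fun h => smul_ne_zero hne hv ?_, ?_⟩
  · rw [← hmul, h, zero_vecMul]
  · rw [hmul]
    exact (polyWeight_smul_le _ v).trans
      (Nat.mul_le_mul_right _ (card_support_X_pow_sub_X_pow_le i j))

variable [DecidableEq κ]

theorem lowPart_vecMul_ne_zero (hδ : δ ≠ 0) (hGQ : G * Q = δ • (1 : Matrix κ κ K[X])) {T : ℕ}
    (hT : δ.natDegree < T) {b : κ → K[X]} {i : κ} (hb : ¬ X ∣ b i) :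
    lowPart T (b ᵥ* G) ≠ 0 := fun h0 => by
  have hhigh : (X ^ T : K[X]) • highPart T (b ᵥ* G) = b ᵥ* G := by
    simpa [h0] using lowPart_add_X_pow_smul_highPart T (b ᵥ* G)
  have hmul : δ * b i = X ^ T * (highPart T (b ᵥ* G) ᵥ* Q) i := by
    have := congrFun (vecMul_vecMul_eq_smul hGQ b) i
    rw [← hhigh, smul_vecMul] at this
    exact this.symm
  have hdvd : X ^ T ∣ δ := prime_X.pow_dvd_of_dvd_mul_right T hb ⟨_, hmul⟩
  exact hT.not_ge (by simpa using natDegree_le_of_dvd hdvd hδ)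

theorem exists_natDegree_le_or_exists_polyWeight_le_half (hδ : δ ≠ 0) (hδD : δ.natDegree ≤ D)
    (hGQ : G * Q = δ • (1 : Matrix κ κ K[X]))
    (hP : ∀ i j, (parityCheck δ Q G i j).natDegree ≤ D) {a : κ → K[X]} (ha : a ≠ 0)
    (haN : polyWeight (a ᵥ* G) ≤ N) :
    (∃ b, b ≠ 0 ∧ (∀ j, ((b ᵥ* G) j).natDegree ≤ (N + 1) * (D + 1)) ∧ polyWeight (b ᵥ* G) ≤ N) ∨
      ∃ v, v ≠ 0 ∧ polyWeight v ≤ N / 2 ∧ v ᵥ* parityCheck δ Q G = 0 := by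
  obtain ⟨m, b, rfl, i, hbi⟩ := exists_eq_pow_smul_and_not_dvd not_isUnit_X ha
  rw [smul_vecMul, polyWeight_X_pow_smul] at haN
  by_cases hB : ∀ j, ((b ᵥ* G) j).natDegree ≤ (N + 1) * (D + 1)
  · exact .inl ⟨b, right_ne_zero_of_smul ha, hB, haN⟩
  push Not at hB
  obtain ⟨j, hj⟩ := hB
  obtain ⟨T, hDT, hTj, hlow, hhigh⟩ := exists_vecMul_lowPart_eq_zero_and_vecMul_highPart_eq_zero
    hP (vecMul_vecMul_parityCheck hGQ b)
    ((Nat.mul_le_mul_right _ (Nat.succ_le_succ haN)).trans hj.le)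
  have hwt := polyWeight_lowPart_add_polyWeight_highPart T (b ᵥ* G)
  right
  by_cases hle : polyWeight (lowPart T (b ᵥ* G)) ≤ N / 2
  · exact ⟨_, lowPart_vecMul_ne_zero hδ hGQ (hδD.trans_lt hDT) hbi, hle, hlow⟩
  · exact ⟨_, highPart_ne_zero (ne_zero_of_natDegree_gt hj) hTj, by omega, hhigh⟩

theorem natDegree_le_of_vecMul (hδ : δ ≠ 0) (hGQ : G * Q = δ • (1 : Matrix κ κ K[X]))
    (hQ : ∀ j i, (Q j i).natDegree ≤ D) {B : ℕ} {a : κ → K[X]}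
    (ha : ∀ j, ((a ᵥ* G) j).natDegree ≤ B) (i : κ) : (a i).natDegree ≤ B + D := by
  by_cases hai : a i = 0
  · simp [hai]
  have hmul : ((a ᵥ* G) ᵥ* Q) i = δ * a i := congrFun (vecMul_vecMul_eq_smul hGQ a) i
  have hdeg := natDegree_vecMul_le ha hQ i
  rw [hmul, natDegree_mul hδ hai] at hdeg
  exact le_of_add_le_right hdeg

theorem exists_polyWeight_vecMul_le_iff (F : Type*) [Field F] [Finite F] [Algebra F K]
    [Algebra.IsAlgebraic F K] (hδ : δ ≠ 0) (hδD : δ.natDegree ≤ D)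
    (hGQ : G * Q = δ • (1 : Matrix κ κ K[X])) (hQ : ∀ j i, (Q j i).natDegree ≤ D)
    (hP : ∀ i j, (parityCheck δ Q G i j).natDegree ≤ D) :
    (∃ a, a ≠ 0 ∧ polyWeight (a ᵥ* G) ≤ N) ↔
      (∃ a, a ≠ 0 ∧ (∀ i, (a i).natDegree ≤ (N + 1) * (D + 1) + D) ∧ polyWeight (a ᵥ* G) ≤ N) ∨
      ∃ v, v ≠ 0 ∧ (∀ j, (v j).natDegree ≤ (N / 2 + 1) * (D + 1)) ∧ polyWeight v ≤ N / 2 ∧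
        v ᵥ* parityCheck δ Q G = 0 := by
  constructor
  · rintro ⟨a, ha, haN⟩
    rcases exists_natDegree_le_or_exists_polyWeight_le_half hδ hδD hGQ hP ha haN with
      ⟨b, hb, hbB, hbN⟩ | ⟨v, hv, hvN, hvP⟩
    · exact .inl ⟨b, hb, natDegree_le_of_vecMul hδ hGQ hQ hbB, hbN⟩
    · exact .inr (exists_natDegree_le_of_vecMul_eq_zero hP hv hvP hvN)
  · rintro (⟨a, ha, -, haN⟩ | ⟨v, hv, -, hvN, hvP⟩)
    · exact ⟨a, ha, haN⟩
    · obtain ⟨a, ha, haN⟩ := exists_polyWeight_vecMul_le_of_parityCheck F hδ hv hvP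
      exact ⟨a, ha, haN.trans (by omega)⟩

end Saturation

section FreeDist
open Matrix
variable {K κ : Type*} [Field K] [Fintype κ] [Nonempty κ] {n : ℕ} {G : Matrix κ (Fin n) K[X]}

theorem freeDist_span_row_le_iff (hG : LinearIndependent K[X] G.row) (N : ℕ) :
    freeDist (Submodule.span K[X] (Set.range G.row)) ≤ N ↔
      ∃ a, a ≠ 0 ∧ polyWeight (a ᵥ* G) ≤ N := by
  have hinj := Matrix.vecMul_injective_iff.2 hG
  have hmem (a : κ → K[X]) : a ᵥ* G ∈ Submodule.span K[X] (Set.range G.row) :=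
    range_vecMulLinear G ▸ LinearMap.mem_range_self G.vecMulLinear a
  have hne (a : κ → K[X]) : a ᵥ* G ≠ 0 ↔ a ≠ 0 := hinj.ne_iff' (zero_vecMul G)
  constructor
  · intro h
    obtain ⟨c, hc, hc0, hw⟩ : freeDist (Submodule.span K[X] (Set.range G.row)) ∈ _ :=
      Nat.sInf_mem ⟨_, _, hmem 1, (hne 1).2 one_ne_zero, rfl⟩
    rw [← range_vecMulLinear] at hc
    obtain ⟨a, rfl⟩ := hc
    exact ⟨a, (hne a).1 hc0, hw.trans_le h⟩
  · rintro ⟨a, ha, haN⟩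
    exact le_trans (Nat.sInf_le (m := polyWeight (a ᵥ* G)) ⟨_, hmem a, (hne a).2 ha, rfl⟩) haN
end FreeDist

/-! ### Closed conditions on the parameter -/

section Zariski
open Matrix
variable {σ K : Type*} [Field K]

variable (σ K) in
/-- The Zariski topology on the affine space `σ → K`, induced from the spectrum of the polynomial
ring by sending a point to its maximal ideal. It is only a local instance because it would
conflict with the product topology for a topological field `K`. -/
noncomputable abbrev zariskiTopology : TopologicalSpace (σ → K) :=
  .induced (MvPolynomial.pointToPoint (k := K)) PrimeSpectrum.zariskiTopology

attribute [local instance] zariskiTopology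

theorem isClosed_iff_exists_zeroLocus {Z : Set (σ → K)} :
    IsClosed Z ↔ ∃ I : Ideal (MvPolynomial σ K), Z = MvPolynomial.zeroLocus K I := by
  have hpre (I : Ideal (MvPolynomial σ K)) : MvPolynomial.pointToPoint (k := K) ⁻¹'
      PrimeSpectrum.zeroLocus (I : Set (MvPolynomial σ K)) = MvPolynomial.zeroLocus K I :=
    Set.ext fun α => by simp [MvPolynomial.pointToPoint, Set.subset_def]
  simp only [isClosed_induced_iff, PrimeSpectrum.isClosed_iff_zeroLocus_ideal]
  constructor
  · rintro ⟨_, ⟨I, rfl⟩, rfl⟩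
    exact ⟨I, hpre I⟩
  · rintro ⟨I, rfl⟩
    exact ⟨_, ⟨I, rfl⟩, hpre I⟩

theorem isClosed_setOf_eval_eq_zero (p : MvPolynomial σ K) :
    IsClosed {α : σ → K | MvPolynomial.eval α p = 0} :=
  isClosed_iff_exists_zeroLocus.2 ⟨Ideal.span {p}, by
    simp [MvPolynomial.zeroLocus_span, MvPolynomial.aeval_eq_eval]⟩

theorem exists_finset_eval_eq_zero [Finite σ] {Z : Set (σ → K)} (hZ : IsClosed Z) :
    ∃ s : Finset (MvPolynomial σ K), Z = {α | ∀ p ∈ s, MvPolynomial.eval α p = 0} := by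
  obtain ⟨I, rfl⟩ := isClosed_iff_exists_zeroLocus.1 hZ
  obtain ⟨s, rfl⟩ := IsNoetherian.noetherian I
  exact ⟨s, by simp [MvPolynomial.zeroLocus_span, MvPolynomial.aeval_eq_eval]⟩

theorem exists_finset_of_lowerSemicontinuousOn [Finite σ] {f : (σ → K) → ℕ}
    {U : Set (σ → K)} (hf : LowerSemicontinuousOn f U) (N : ℤ) :
    ∃ s : Finset (MvPolynomial σ K), ∀ α ∈ U,
      ((f α : ℤ) ≤ N ↔ ∀ p ∈ s, MvPolynomial.eval α p = 0) := by
  have hcast : LowerSemicontinuousOn (fun α => (f α : ℤ)) U :=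
    continuous_of_discreteTopology.comp_lowerSemicontinuousOn hf Nat.mono_cast
  obtain ⟨Z, hZ, hfZ⟩ := lowerSemicontinuousOn_iff_preimage_Iic.1 hcast N
  obtain ⟨s, rfl⟩ := exists_finset_eval_eq_zero hZ
  exact ⟨s, fun α hα => by simpa [hα] using Set.ext_iff.1 hfZ α⟩

theorem isClosed_setOf_exists_mulVec_eq_zero {κ J : Type*} [Fintype κ]
    (M : Matrix J κ (MvPolynomial σ K)) :
    IsClosed {α : σ → K | ∃ x, x ≠ 0 ∧ M.map (MvPolynomial.eval α) *ᵥ x = 0} := by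
  classical
  have hdet (α : σ → K) (f : κ → J) : ((M.map (MvPolynomial.eval α)).submatrix f id).det =
      MvPolynomial.eval α (M.submatrix f id).det := ((MvPolynomial.eval α).map_det _).symm
  simp only [exists_mulVec_eq_zero_iff_forall_det_submatrix_eq_zero, hdet, Set.ofPred_forall]
  exact isClosed_iInter fun f => isClosed_setOf_eval_eq_zero _

theorem isClosed_setOf_exists_mem_forall_eq_zero {V J : Type*} [AddCommGroup V] [Module K V]
    (W : Submodule K V) [FiniteDimensional K W] (ℓ : J → (σ → K) → Module.Dual K V)
    (hℓ : ∀ j, ∀ v ∈ W, ∃ p : MvPolynomial σ K, ∀ α, ℓ j α v = MvPolynomial.eval α p) :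
    IsClosed {α | ∃ v ∈ W, v ≠ 0 ∧ ∀ j, ℓ j α v = 0} := by
  let b := Module.finBasis K W
  choose p hp using fun j a => hℓ j (b a) (b a).2
  have hsum (j : J) (α : σ → K) (x : Fin (Module.finrank K W) → K) :
      ℓ j α (b.equivFun.symm x) = ((Matrix.of p).map (MvPolynomial.eval α) *ᵥ x) j := by
    simp [b.equivFun_symm_apply, hp, mulVec, dotProduct, mul_comm]
  convert isClosed_setOf_exists_mulVec_eq_zero (Matrix.of p) using 3 with α
  constructor
  · rintro ⟨v, hv, hv0, hℓv⟩
    refine ⟨b.equivFun ⟨v, hv⟩, by simpa using hv0, funext fun j => ?_⟩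
    rw [← hsum, LinearEquiv.symm_apply_apply, hℓv, Pi.zero_apply]
  · rintro ⟨x, hx, hpx⟩
    exact ⟨b.equivFun.symm x, Subtype.coe_prop _, fun h0 =>
      hx (b.equivFun.symm.map_eq_zero_iff.1 (Subtype.ext h0)), fun j =>
        (hsum j α x).trans (congrFun hpx j)⟩

variable {κ ι : Type*}

/-- The value at the point `α` of a matrix of polynomials whose coefficients are polynomial
functions on the affine space `σ → K`; the paper's `𝒢_α`. -/
noncomputable def specialize (α : σ → K) (M : Matrix κ ι (MvPolynomial σ K)[X]) :
    Matrix κ ι K[X] :=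
  M.map (mapRingHom (MvPolynomial.eval α))

theorem natDegree_specialize_le (α : σ → K) (M : Matrix κ ι (MvPolynomial σ K)[X]) (a : κ)
    (i : ι) : (specialize α M a i).natDegree ≤ (M a i).natDegree :=
  natDegree_map_le

section Codewords
variable [Fintype κ]

theorem coeff_vecMul_specialize (α : σ → K) (M : Matrix κ ι (MvPolynomial σ K)[X]) (v : κ → K[X])
    (i : ι) (m : ℕ) : ((v ᵥ* specialize α M) i).coeff m =
      MvPolynomial.eval α ((((fun a => (v a).map MvPolynomial.C) ᵥ* M) i).coeff m) := by
  have hv : (mapRingHom (MvPolynomial.eval α)) ∘ (fun a => (v a).map MvPolynomial.C) = v :=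
    funext fun a => by simp [Polynomial.map_map, MvPolynomial.eval]
  rw [← coeff_map, ← coe_mapRingHom, RingHom.map_vecMul, hv, specialize]

theorem isClosed_setOf_exists_forall_coeff_vecMul_eq_zero (M : Matrix κ ι (MvPolynomial σ K)[X])
    (d : ℕ) (I : Set (ι × ℕ)) :
    IsClosed {α : σ → K | ∃ v : κ → K[X], v ≠ 0 ∧ (∀ a, (v a).natDegree ≤ d) ∧
      ∀ p ∈ I, ((v ᵥ* specialize α M) p.1).coeff p.2 = 0} := by
  let W : Submodule K (κ → K[X]) := .pi Set.univ fun _ => degreeLE K d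
  have hW (v : κ → K[X]) : v ∈ W ↔ ∀ a, (v a).natDegree ≤ d := by
    simp [W, mem_degreeLE, natDegree_le_iff_degree_le]
  have : FiniteDimensional K W := .of_fg <| Submodule.fg_pi fun _ => by
    classical exact ⟨_, degreeLE_eq_span_X_pow.symm⟩
  let ℓ (p : I) (α : σ → K) : Module.Dual K (κ → K[X]) :=
    lcoeff K p.1.2 ∘ₗ LinearMap.proj p.1.1 ∘ₗ (specialize α M).vecMulLinear.restrictScalars K
  convert isClosed_setOf_exists_mem_forall_eq_zero W ℓ fun p v _ =>
    ⟨_, fun α => coeff_vecMul_specialize α M v p.1.1 p.1.2⟩ using 2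
  simp only [Subtype.forall, ← hW, and_left_comm]
  rfl

theorem isClosed_setOf_exists_polyWeight_vecMul_le {n : ℕ}
    (M : Matrix κ (Fin n) (MvPolynomial σ K)[X]) (P : Matrix κ ι (MvPolynomial σ K)[X]) (d N : ℕ) :
    IsClosed {α : σ → K | ∃ v : κ → K[X], v ≠ 0 ∧ (∀ a, (v a).natDegree ≤ d) ∧
      polyWeight (v ᵥ* specialize α M) ≤ N ∧ v ᵥ* specialize α P = 0} := by
  obtain ⟨D, hD⟩ := Finite.exists_le fun q : κ × Fin n => (M q.1 q.2).natDegree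
  let 𝒮 := (Finset.univ.sigma fun _ : Fin n => Finset.range (d + D + 1)).powerset.filter
    (·.card ≤ N)
  have hweight {α : σ → K} {v : κ → K[X]} (hv : ∀ a, (v a).natDegree ≤ d) :
      polyWeight (v ᵥ* specialize α M) ≤ N ↔
        ∃ S ∈ 𝒮, ∀ j m, ⟨j, m⟩ ∉ S → ((v ᵥ* specialize α M) j).coeff m = 0 := by
    simp only [𝒮, Finset.mem_filter, and_assoc]
    exact polyWeight_le_iff_exists <| natDegree_vecMul_le hv fun a j =>
      (natDegree_specialize_le α M a j).trans (hD (a, j))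
  let I (S : Finset (Σ _ : Fin n, ℕ)) : Set ((Fin n ⊕ ι) × ℕ) :=
    {p | ∀ j, p.1 = .inl j → ⟨j, p.2⟩ ∉ S}
  have hI (α : σ → K) (v : κ → K[X]) (S) :
      (∀ p ∈ I S, ((v ᵥ* specialize α (fromCols M P)) p.1).coeff p.2 = 0) ↔
        (∀ j m, ⟨j, m⟩ ∉ S → ((v ᵥ* specialize α M) j).coeff m = 0) ∧ v ᵥ* specialize α P = 0 := by
    have hcols : specialize α (fromCols M P) = fromCols (specialize α M) (specialize α P) :=
      Matrix.ext fun a i => by cases i <;> rfl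
    simp [I, hcols, funext_iff, Polynomial.ext_iff]
  convert isClosed_biUnion_finset (s := 𝒮) fun S _ =>
    isClosed_setOf_exists_forall_coeff_vecMul_eq_zero (fromCols M P) d (I S)
  ext α
  simp only [Set.mem_iUnion, Set.mem_ofPred_eq, hI]
  constructor
  · rintro ⟨v, hv, hvd, hvN, hvP⟩
    obtain ⟨S, hS, hvS⟩ := (hweight hvd).1 hvN
    exact ⟨S, hS, v, hv, hvd, hvS, hvP⟩
  · rintro ⟨S, hS, v, hv, hvd, hvS, hvP⟩
    exact ⟨v, hv, hvd, (hweight hvd).2 ⟨S, hS, hvS⟩, hvP⟩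

theorem isClosed_setOf_map_eval_eq_zero (p : (MvPolynomial σ K)[X]) :
    IsClosed {α : σ → K | p.map (MvPolynomial.eval α) = 0} := by
  simp only [Polynomial.ext_iff, coeff_map, coeff_zero, Set.ofPred_forall]
  exact isClosed_iInter fun m => isClosed_setOf_eval_eq_zero _

theorem isClosed_setOf_exists_codeword {n : ℕ} (M : Matrix κ (Fin n) (MvPolynomial σ K)[X])
    (d N : ℕ) : IsClosed {α : σ → K | ∃ a : κ → K[X], a ≠ 0 ∧ (∀ i, (a i).natDegree ≤ d) ∧
      polyWeight (a ᵥ* specialize α M) ≤ N} := by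
  simpa only [eq_iff_true_of_subsingleton, and_true] using
    isClosed_setOf_exists_polyWeight_vecMul_le M (0 : Matrix κ (Fin 0) _) d N

theorem isClosed_setOf_exists_mem_ker {n : ℕ} (P : Matrix (Fin n) ι (MvPolynomial σ K)[X])
    (d N : ℕ) : IsClosed {α : σ → K | ∃ v : Fin n → K[X], v ≠ 0 ∧ (∀ j, (v j).natDegree ≤ d) ∧
      polyWeight v ≤ N ∧ v ᵥ* specialize α P = 0} := by
  have hone (α : σ → K) : specialize α (1 : Matrix (Fin n) (Fin n) _) = 1 :=
    Matrix.map_one _ (map_zero _) (map_one _)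
  simpa only [hone, vecMul_one] using isClosed_setOf_exists_polyWeight_vecMul_le
    (1 : Matrix (Fin n) (Fin n) _) P d N

theorem isClosed_setOf_det_eq_zero_or_exists_codeword (F : Type*) [Field F] [Finite F]
    [Algebra F K] [Algebra.IsAlgebraic F K] [DecidableEq κ] {n : ℕ}
    (M : Matrix κ (Fin n) (MvPolynomial σ K)[X]) (φ : κ → Fin n) (N : ℕ) :
    IsClosed {α : σ → K | ((specialize α M).submatrix id φ).det = 0 ∨
      ∃ a, a ≠ 0 ∧ polyWeight (a ᵥ* specialize α M) ≤ N} := by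
  let δ := (M.submatrix id φ).det
  obtain ⟨Q, hMQ⟩ : ∃ Q : Matrix (Fin n) κ _, M * Q = δ • (1 : Matrix κ κ _) :=
    exists_mul_eq_det_submatrix_smul_one M φ
  let P := parityCheck δ Q M
  obtain ⟨D₁, hQ⟩ := Finite.exists_le fun q : Fin n × κ => (Q q.1 q.2).natDegree
  obtain ⟨D₂, hP⟩ := Finite.exists_le fun q : Fin n × Fin n => (P q.1 q.2).natDegree
  let D := max δ.natDegree (max D₁ D₂)
  have hdet (α : σ → K) :
      ((specialize α M).submatrix id φ).det = δ.map (MvPolynomial.eval α) :=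
    ((mapRingHom (MvPolynomial.eval α)).map_det _).symm
  have hMQα (α : σ → K) : specialize α M * specialize α Q =
      δ.map (MvPolynomial.eval α) • (1 : Matrix κ κ K[X]) := by
    rw [specialize, specialize, ← Matrix.map_mul, hMQ, Matrix.map_smul' _ _ _ (map_mul _),
      Matrix.map_one _ (map_zero _) (map_one _), coe_mapRingHom]
  have hPα (α : σ → K) : specialize α P =
      parityCheck (δ.map (MvPolynomial.eval α)) (specialize α Q) (specialize α M) :=
    map_parityCheck _
  have hiff (α : σ → K) (hδ : δ.map (MvPolynomial.eval α) ≠ 0) :=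
    exists_polyWeight_vecMul_le_iff F (N := N) (D := D) hδ
      (natDegree_map_le.trans (le_max_left _ _)) (hMQα α)
      (fun j i => (natDegree_specialize_le α Q j i).trans ((hQ (j, i)).trans (by omega)))
      (fun i j => hPα α ▸ (natDegree_specialize_le α P i j).trans ((hP (i, j)).trans (by omega)))
  simp only [hdet, or_congr_right' (hiff _), ← hPα]
  exact (isClosed_setOf_map_eval_eq_zero δ).union
    ((isClosed_setOf_exists_codeword M _ N).union (isClosed_setOf_exists_mem_ker P _ (N / 2)))

end Codewords

theorem freeDist_lowerSemicontinuous_general (F : Type*) [Field F] [Finite F] [Algebra F K]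
    [Algebra.IsAlgebraic F K] [Finite κ] {n : ℕ}
    (𝒢 : Matrix κ (Fin n) (MvPolynomial σ K)[X]) {U : Set (σ → K)}
    (hind : ∀ α ∈ U, LinearIndependent K[X] (specialize α 𝒢).row) :
    LowerSemicontinuousOn
      (fun α => freeDist (Submodule.span K[X] (Set.range (specialize α 𝒢).row))) U := by
  classical
  have := Fintype.ofFinite κ
  rcases isEmpty_or_nonempty κ with hκ | hκ
  · simp only [Set.range_eq_empty]
    exact lowerSemicontinuousOn_const
  refine lowerSemicontinuousOn_iff_preimage_Iic.2 fun N =>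
    ⟨⋂ φ : κ → Fin n, _, isClosed_iInter fun φ =>
      isClosed_setOf_det_eq_zero_or_exists_codeword F 𝒢 φ N, ?_⟩
  ext α
  refine and_congr_right fun hα => ?_
  rw [Set.mem_preimage, Set.mem_Iic, freeDist_span_row_le_iff (hind α hα), Set.mem_iInter]
  refine ⟨fun h φ => .inr h, fun h => ?_⟩
  obtain ⟨φ, hφ⟩ := exists_submatrix_det_ne_zero (hind α hα)
  exact (h φ).resolve_left hφ

end Zariski

/-- For a family of convolutional codes parameterized by a Zariski open
subset `U` of affine space over the algebraic closure `K` of a finite field `𝔽`, the free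
distance is a lower semicontinuous function of the parameter: for every integer `N`,
the locus `{α ∈ U : d_free(C_α) ≤ N}` is Zariski closed in `U`, i.e. it is cut out in `U`
by the common vanishing of finitely many polynomials. -/
theorem freeDist_lowerSemicontinuous {F : Type*} [Field F] [Fintype F]
    {K : Type*} [Field K] [Algebra F K] [IsAlgClosure F K] {k n r : ℕ}
    (𝒢 : Fin k → Fin n → Polynomial (MvPolynomial (Fin (r + 1)) F))
    (U : Set (Fin (r + 1) → K))
    (hU : ∃ s : Finset (MvPolynomial (Fin (r + 1)) K),
      Uᶜ = {α | ∀ p ∈ s, MvPolynomial.eval α p = 0})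
    (hind : ∀ α ∈ U, LinearIndependent (Polynomial K)
      (fun i => fun j => (𝒢 i j).map
        (MvPolynomial.aeval α : MvPolynomial (Fin (r + 1)) F →ₐ[F] K).toRingHom))
    (N : ℤ) :
    ∃ s : Finset (MvPolynomial (Fin (r + 1)) K), ∀ α ∈ U,
      ((freeDist (Submodule.span (Polynomial K) (Set.range fun i => fun j =>
          (𝒢 i j).map
            (MvPolynomial.aeval α : MvPolynomial (Fin (r + 1)) F →ₐ[F] K).toRingHom)) : ℤ)
        ≤ N ↔ ∀ p ∈ s, MvPolynomial.eval α p = 0) := by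
  have : Algebra.IsAlgebraic F K := IsAlgClosure.isAlgebraic
  have hspec (α : Fin (r + 1) → K) :
      (fun i j => (𝒢 i j).map (MvPolynomial.aeval α).toRingHom) =
        (specialize α (.of fun i j => (𝒢 i j).map (MvPolynomial.map (algebraMap F K)))).row := by
    funext i j
    rw [AlgHom.toRingHom_eq_coe, Matrix.row_apply, specialize, Matrix.map_apply, Matrix.of_apply,
      coe_mapRingHom, Polynomial.map_map]
    exact congrArg (map · _) (RingHom.ext fun p => (MvPolynomial.eval_map _ _ p).symm)
  simp only [hspec] at hind ⊢
  exact exists_finset_of_lowerSemicontinuousOn (freeDist_lowerSemicontinuous_general F _ hind) N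
end
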